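/- Let T be a finite tree and let T1 and T2 each be obtained from T by a single grafting operation. If T1 and T2 are not isomorphic as graphs, then their Tutte-like polynomials are distinct: f(T1;t,z) ≠ f(T2;t,z). In particular, two non-isomorphic trees at the same level of a poset that have the same parent tree have distinct Tutte-like polynomials. -/

import Mathlib

open SimpleGraph

/-- `Grafts G G'` : `G'` is obtained from `G` by one grafting operation. -/
def Grafts {V : Type*} (G G' : SimpleGraph V) : Prop :=
  ∃ n1 n2 v : V, G.Adj n1 n2 ∧ (G.neighborSet n2).ncard = 1 ∧
    (G.neighborSet n1).ncard = 2 ∧ G.Adj n1 v ∧ v ≠ n2 ∧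
    G' = G.deleteEdges {s(n1, n2)} ⊔ fromEdgeSet {s(v, n2)}

/-- `IsSubtree G F`: the finite edge set `F` consists of edges of `G` and its
edge-induced subgraph is connected. -/
def IsSubtree {V : Type*} (G : SimpleGraph V) (F : Finset (Sym2 V)) : Prop :=
  (F : Set (Sym2 V)) ⊆ G.edgeSet ∧
    ∀ u v : V, u ∈ (fromEdgeSet (F : Set (Sym2 V))).support →
      v ∈ (fromEdgeSet (F : Set (Sym2 V))).support →
      (fromEdgeSet (F : Set (Sym2 V))).Reachable u v

/-- `leafCount F`: the number of leaf edges of the edge set `F`, i.e. edges of `F`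
incident to a vertex of degree 1 in the subgraph formed by `F`. -/
noncomputable def leafCount {V : Type*} (F : Finset (Sym2 V)) : ℕ :=
  {e : Sym2 V | e ∈ F ∧ ∃ u ∈ e,
    ((fromEdgeSet (F : Set (Sym2 V))).neighborSet u).ncard = 1}.ncard

/-- The Tutte-like polynomial `f(T;t,z) = Σ_F t^{|F|}·(z+1)^{|F|−L(F)}`, the sum running
over all subtrees `F` of `T` (connected edge subsets, including `∅`), viewed as an
element of `ℤ[z][t]` (outer variable `t`, inner variable `z`). -/
noncomputable def tutteLike {V : Type*} [Fintype V] (G : SimpleGraph V) :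
    Polynomial (Polynomial ℤ) :=
  letI := Classical.decEq V
  letI : DecidableRel G.Adj := Classical.decRel _
  letI := Classical.decPred (IsSubtree G)
  ∑ F ∈ G.edgeFinset.powerset.filter (IsSubtree G),
    Polynomial.C ((Polynomial.X + 1) ^ (F.card - leafCount F)) * Polynomial.X ^ F.card



namespace PlantedTree

open Polynomial

/-- The polynomial of a planted tree, given the product `p` of the polynomials of the branches
above its root edge. -/
noncomputable def planted (p : ℤ[X][X]) : ℤ[X][X] := C X + (X - C X) * p

lemma planted_injective : Function.Injective planted := by
  intro p q h
  have h0 : (X - C X : ℤ[X][X]) ≠ 0 := X_sub_C_ne_zero _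
  exact mul_left_cancel₀ h0 (add_left_cancel h)

/-- Monic polynomials in `ℤ[ε][s]` of positive degree which reduce to a power of `s` modulo
`ε`. -/
structure IsPrimary (q : ℤ[X][X]) : Prop where
  monic : q.Monic
  degree_pos : 0 < q.natDegree
  dvd_coeff : ∀ n < q.natDegree, (X : ℤ[X]) ∣ q.coeff n

lemma dvd_coeff_mul {p q : ℤ[X][X]} (hp : p.Monic) (hq : q.Monic)
    (hp' : ∀ n < p.natDegree, (X : ℤ[X]) ∣ p.coeff n)
    (hq' : ∀ n < q.natDegree, (X : ℤ[X]) ∣ q.coeff n) :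
    ∀ n < (p * q).natDegree, (X : ℤ[X]) ∣ (p * q).coeff n := by
  intro n hn
  rw [hp.natDegree_mul hq] at hn
  rw [coeff_mul]
  refine Finset.dvd_sum fun x hx => ?_
  rw [Finset.HasAntidiagonal.mem_antidiagonal] at hx
  by_cases h : x.1 < p.natDegree
  · exact (hp' _ h).mul_right _
  · exact (hq' _ (by omega)).mul_left _

lemma prod_monic_dvd_coeff {ι : Type*} (s : Finset ι) (q : ι → ℤ[X][X])
    (h : ∀ i ∈ s, IsPrimary (q i)) :
    (∏ i ∈ s, q i).Monic ∧
      ∀ n < (∏ i ∈ s, q i).natDegree, (X : ℤ[X]) ∣ (∏ i ∈ s, q i).coeff n := by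
  classical
  induction s using Finset.induction_on with
  | empty => simp
  | insert a s ha ih =>
    obtain ⟨h1, h2⟩ := ih fun i hi => h i (Finset.mem_insert_of_mem hi)
    have h3 := h a (Finset.mem_insert_self a s)
    rw [Finset.prod_insert ha]
    exact ⟨h3.monic.mul h1, dvd_coeff_mul h3.monic h1 h3.dvd_coeff h2⟩

lemma planted_one : planted 1 = X := by simp [planted]

lemma natDegree_planted {p : ℤ[X][X]} (hp : p.Monic) :
    (planted p).natDegree = p.natDegree + 1 ∧ (planted p).Monic := by
  have h1 : ((X - C X) * p : ℤ[X][X]).Monic := (monic_X_sub_C _).mul hp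
  have h2 : ((X - C X) * p : ℤ[X][X]).natDegree = p.natDegree + 1 := by
    rw [(monic_X_sub_C _).natDegree_mul hp, natDegree_X_sub_C, add_comm]
  have h3 : (C X : ℤ[X][X]).degree < ((X - C X) * p : ℤ[X][X]).degree := by
    rw [degree_eq_natDegree h1.ne_zero, h2]
    refine lt_of_le_of_lt degree_C_le ?_
    exact_mod_cast Nat.succ_pos _
  refine ⟨?_, ?_⟩
  · rw [planted, natDegree_add_eq_right_of_degree_lt h3, h2]
  · exact h1.add_of_right h3

lemma isPrimary_planted {ι : Type*} (s : Finset ι) (q : ι → ℤ[X][X])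
    (h : ∀ i ∈ s, IsPrimary (q i)) : IsPrimary (planted (∏ i ∈ s, q i)) := by
  obtain ⟨h1, h2⟩ := prod_monic_dvd_coeff s q h
  obtain ⟨h3, h4⟩ := natDegree_planted h1
  refine ⟨h4, by omega, fun n hn => ?_⟩
  rw [h3] at hn
  rw [planted, sub_mul, coeff_add, coeff_sub, coeff_C_mul]
  refine dvd_add ?_ (dvd_sub ?_ (dvd_mul_right _ _))
  · rw [coeff_C]; split_ifs <;> simp
  · cases n with
    | zero => simp
    | succ n => rw [coeff_X_mul]; exact h2 n (by omega)

lemma irreducible_planted {ι : Type*} (s : Finset ι) (q : ι → ℤ[X][X])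
    (h : ∀ i ∈ s, IsPrimary (q i)) : Irreducible (planted (∏ i ∈ s, q i)) := by
  obtain rfl | ⟨i, hi⟩ := s.eq_empty_or_nonempty
  · rw [Finset.prod_empty, planted_one]; exact irreducible_X
  have hP := isPrimary_planted s q h
  have hdvd : (X : ℤ[X]) ∣ (∏ i ∈ s, q i).coeff 0 := by
    rw [coeff_zero_eq_eval_zero, eval_prod]
    refine dvd_trans ?_ (Finset.dvd_prod_of_mem _ hi)
    rw [← coeff_zero_eq_eval_zero]
    exact (h i hi).dvd_coeff 0 (h i hi).degree_pos
  refine IsEisensteinAt.irreducible (𝓟 := Ideal.span {(X : ℤ[X])}) ⟨?_, ?_, ?_⟩ ?_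
    hP.monic.isPrimitive hP.degree_pos
  · rw [hP.monic.leadingCoeff, Ideal.mem_span_singleton]
    exact fun hu => not_isUnit_X (isUnit_of_dvd_one hu)
  · intro n hn
    exact Ideal.mem_span_singleton.2 (hP.dvd_coeff n hn)
  · rw [Ideal.span_singleton_pow, Ideal.mem_span_singleton]
    obtain ⟨c, hc⟩ := hdvd
    have h0 : (planted (∏ i ∈ s, q i)).coeff 0 = X * (1 - X * c) := by
      rw [planted, sub_mul, coeff_add, coeff_sub, coeff_C_mul, hc]
      simp
      ring
    rw [h0, pow_two]
    intro hd
    have := (mul_dvd_mul_iff_left (X_ne_zero (R := ℤ))).1 hd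
    have h5 : (X : ℤ[X]) ∣ 1 := by
      have := dvd_add this (dvd_mul_right X c)
      simpa using this
    exact not_isUnit_X (isUnit_of_dvd_one h5)
  · exact (Ideal.span_singleton_prime X_ne_zero).2 prime_X

lemma map_val_eq_of_prod_eq {ι κ : Type*} (s : Finset ι) (t : Finset κ) (p : ι → ℤ[X][X])
    (q : κ → ℤ[X][X]) (hp : ∀ i ∈ s, (p i).Monic ∧ Irreducible (p i))
    (hq : ∀ i ∈ t, (q i).Monic ∧ Irreducible (q i)) (h : ∏ i ∈ s, p i = ∏ i ∈ t, q i) :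
    s.val.map p = t.val.map q := by
  have h1 := UniqueFactorizationMonoid.factors_unique (f := s.val.map p) (g := t.val.map q)
    (by simpa using fun i hi => (hp i hi).2) (by simpa using fun i hi => (hq i hi).2)
    (by rw [show (s.val.map p).prod = (t.val.map q).prod from h]; exact Associated.refl _)
  rw [← Multiset.rel_eq]
  refine h1.mono fun a ha b hb hab => ?_
  obtain ⟨i, hi, rfl⟩ := Multiset.mem_map.1 ha
  obtain ⟨j, hj, rfl⟩ := Multiset.mem_map.1 hb
  exact eq_of_monic_of_associated (hp i hi).1 (hq j hj).1 hab

lemma exists_bijOn_of_map_eq {ι κ β : Type*} [Nonempty κ] (s : Finset ι) (t : Finset κ)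
    (p : ι → β) (q : κ → β) (h : s.val.map p = t.val.map q) :
    ∃ σ : ι → κ, Set.BijOn σ s t ∧ ∀ i ∈ s, q (σ i) = p i := by
  classical
  induction s using Finset.induction_on generalizing t with
  | empty =>
    have : t = ∅ := by simpa using h.symm
    subst this
    exact ⟨fun _ => Classical.arbitrary κ, by simp, by simp⟩
  | insert a s ha ih =>
    have h1 : p a ∈ t.val.map q := by rw [← h]; simp [ha]
    obtain ⟨b, hb, hba⟩ := Multiset.mem_map.1 h1
    have hb' : b ∈ t := hb
    obtain ⟨σ, h2, h3⟩ := ih (t.erase b) (by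
      rw [← Finset.insert_erase hb', Finset.insert_val_of_notMem ha,
        Finset.insert_val_of_notMem (Finset.notMem_erase b t), Multiset.map_cons,
        Multiset.map_cons, hba] at h
      exact (Multiset.cons_inj_right _).1 h)
    have hne : ∀ i ∈ s, i ≠ a := fun i hi h => ha (h ▸ hi)
    refine ⟨Function.update σ a b, ?_, ?_⟩
    · have h4 : Set.BijOn (Function.update σ a b) s (t.erase b : Finset κ) :=
        h2.congr fun i hi => by rw [Function.update_of_ne (hne i hi)]
      have h5 := h4.insert (a := a) (by simp)
      rwa [Function.update_self, ← Finset.coe_insert, ← Finset.coe_insert,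
        Finset.insert_erase hb'] at h5
    · intro i hi
      obtain rfl | hi := Finset.mem_insert.1 hi
      · simpa using hba
      · rw [Function.update_of_ne (hne i hi)]; exact h3 i hi

/-- `G` is a tree with root `r`, parent function `par` and height function `d`. -/
structure IsRooted {V : Type*} (G : SimpleGraph V) (r : V) (par : V → V) (d : V → ℕ) : Prop where
  par_root : par r = r
  depth : ∀ x, x ≠ r → d x = d (par x) + 1
  adj_iff : ∀ a b, G.Adj a b ↔ (a ≠ r ∧ par a = b) ∨ (b ≠ r ∧ par b = a)

/-- The children of `x`. -/
noncomputable def children {V : Type*} [Fintype V] (r : V) (par : V → V) (x : V) : Finset V :=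
  open Classical in Finset.univ.filter fun c => c ≠ r ∧ par c = x

lemma mem_children {V : Type*} [Fintype V] {r : V} {par : V → V} {x c : V} :
    c ∈ children r par x ↔ c ≠ r ∧ par c = x := by simp [children]

/-- A family of polynomials satisfying the recursion of the rooted tree polynomial. -/
def IsCode {V : Type*} [Fintype V] (r : V) (par : V → V) (P : V → ℤ[X][X]) : Prop :=
  ∀ x, P x = ∏ c ∈ children r par x, planted (P c)

namespace IsRooted

variable {V : Type*} {G : SimpleGraph V} {r : V} {par : V → V} {d : V → ℕ}

/-- Induction from the leaves to the root. -/
lemma leaf_induction [Fintype V] (h : IsRooted G r par d) {motive : V → Prop}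
    (step : ∀ x, (∀ c ∈ children r par x, motive c) → motive x) (x : V) : motive x := by
  obtain ⟨N, hN⟩ : ∃ N, ∀ x, d x ≤ N := ⟨Finset.univ.sup d, fun x => Finset.le_sup (by simp)⟩
  induction hk : N - d x using Nat.strong_induction_on generalizing x with
  | _ k ih =>
    refine step x fun c hc => ?_
    rw [mem_children] at hc
    have h1 := h.depth c hc.1
    rw [hc.2] at h1
    have := hN c
    exact ih (N - d c) (by omega) c rfl

/-- Induction from the root to the leaves. -/
lemma root_induction (h : IsRooted G r par d) {motive : V → Prop} (root : motive r)
    (step : ∀ x, x ≠ r → motive (par x) → motive x) (x : V) : motive x := by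
  induction hk : d x using Nat.strong_induction_on generalizing x with
  | _ k ih =>
    by_cases hx : x = r
    · rw [hx]; exact root
    · have := h.depth x hx
      exact step x hx (ih (d (par x)) (by omega) _ rfl)

lemma isPrimary [Fintype V] (h : IsRooted G r par d) {P : V → ℤ[X][X]} (hP : IsCode r par P)
    (x : V) : IsPrimary (planted (P x)) := by
  induction x using h.leaf_induction with
  | step x ih => rw [hP x]; exact isPrimary_planted _ _ ih

lemma irreducible [Fintype V] (h : IsRooted G r par d) {P : V → ℤ[X][X]} (hP : IsCode r par P)
    (x : V) : Irreducible (planted (P x)) := by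
  rw [hP x]; exact irreducible_planted _ _ fun c _ => h.isPrimary hP c

lemma exists_bijOn_children {V' : Type*} [Fintype V] [Fintype V'] {G' : SimpleGraph V'} {r' : V'}
    {par' : V' → V'} {d' : V' → ℕ} (h : IsRooted G r par d) (h' : IsRooted G' r' par' d')
    {P : V → ℤ[X][X]} {P' : V' → ℤ[X][X]} (hP : IsCode r par P) (hP' : IsCode r' par' P')
    (x : V) (x' : V') (hx : P' x' = P x) :
    ∃ σ : V → V', Set.BijOn σ (children r par x) (children r' par' x') ∧
      ∀ c ∈ children r par x, P' (σ c) = P c := by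
  have : Nonempty V' := ⟨x'⟩
  rw [hP x, hP' x'] at hx
  obtain ⟨σ, h1, h2⟩ := exists_bijOn_of_map_eq _ _ _ _ <|
    map_val_eq_of_prod_eq (children r par x) (children r' par' x') (fun c => planted (P c))
      (fun c => planted (P' c)) (fun c _ => ⟨(h.isPrimary hP c).monic, h.irreducible hP c⟩)
      (fun c _ => ⟨(h'.isPrimary hP' c).monic, h'.irreducible hP' c⟩) hx.symm
  exact ⟨σ, h1, fun c hc => planted_injective (h2 c hc)⟩

/-- A top-down recursion principle for maps on a rooted tree. -/
lemma exists_recursive_map {V' : Type*} (h : IsRooted G r par d) (r' : V')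
    (F : V → V' → V → V') :
    ∃ φ : V → V', φ r = r' ∧ ∀ x, x ≠ r → φ x = F (par x) (φ (par x)) x := by
  classical
  let Φ : ℕ → V → V' := fun n => Nat.rec (fun _ => r')
    (fun _ φ x => if x = r then r' else F (par x) (φ (par x)) x) n
  have hΦ : ∀ n x, Φ (n + 1) x = if x = r then r' else F (par x) (Φ n (par x)) x :=
    fun _ _ => rfl
  have hst : ∀ n x, d x < n → Φ n x = Φ (d x + 1) x := by
    intro n
    induction n with
    | zero => intro x hx; omega
    | succ n ih =>
      intro x hx
      rw [hΦ, hΦ]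
      by_cases hxr : x = r
      · simp [hxr]
      · have h1 := h.depth x hxr
        rw [if_neg hxr, if_neg hxr, ih (par x) (by omega), h1]
  refine ⟨fun x => Φ (d x + 1) x, ?_, ?_⟩
  · simp [hΦ]
  · intro x hx
    simp only
    rw [hΦ, if_neg hx, h.depth x hx]

/-- Rooted trees whose roots have the same code are isomorphic. -/
lemma nonempty_iso {V' : Type*} [Fintype V] [Fintype V'] {G' : SimpleGraph V'} {r' : V'}
    {par' : V' → V'} {d' : V' → ℕ} (h : IsRooted G r par d) (h' : IsRooted G' r' par' d')
    {P : V → ℤ[X][X]} {P' : V' → ℤ[X][X]} (hP : IsCode r par P) (hP' : IsCode r' par' P')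
    (hr : P' r' = P r) : Nonempty (G ≃g G') := by
  classical
  have hex : ∀ x x', ∃ σ : V → V', P' x' = P x →
      Set.BijOn σ (children r par x) (children r' par' x') ∧
        ∀ c ∈ children r par x, P' (σ c) = P c := fun x x' => by
    by_cases hx : P' x' = P x
    · obtain ⟨σ, hσ⟩ := h.exists_bijOn_children h' hP hP' x x' hx
      exact ⟨σ, fun _ => hσ⟩
    · exact ⟨fun _ => r', fun h => absurd h hx⟩
  choose σ hσ using hex
  obtain ⟨φ, hφr, hφ⟩ := h.exists_recursive_map r' σ
  have hmem : ∀ x, x ≠ r → x ∈ children r par (par x) := fun x hx => mem_children.2 ⟨hx, rfl⟩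
  have hcode : ∀ x, P' (φ x) = P x := by
    intro x
    induction x using h.root_induction with
    | root => rw [hφr, hr]
    | step x hx ih => rw [hφ x hx]; exact (hσ _ _ ih).2 x (hmem x hx)
  have hpar : ∀ x, x ≠ r → φ x ≠ r' ∧ par' (φ x) = φ (par x) := by
    intro x hx
    have := (hσ _ _ (hcode (par x))).1.mapsTo (hmem x hx)
    rw [← hφ x hx] at this
    exact mem_children.1 this
  have hinj : Function.Injective φ := by
    intro x
    induction x using h.root_induction with
    | root =>
      intro y hy
      by_contra hne
      exact (hpar y (Ne.symm hne)).1 (hy ▸ hφr)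
    | step x hx ih =>
      intro y hxy
      by_cases hy : y = r
      · subst hy
        exact absurd (hxy.trans hφr) (hpar x hx).1
      have h1 : par x = par y := ih (by
        rw [← (hpar x hx).2, ← (hpar y hy).2, hxy])
      refine (hσ _ _ (hcode (par x))).1.injOn (hmem x hx) (h1 ▸ hmem y hy) ?_
      rw [← hφ x hx, hxy, hφ y hy, h1]
  have hsurj : ∀ y, ∃ x, φ x = y := by
    intro y
    induction y using h'.root_induction with
    | root => exact ⟨r, hφr⟩
    | step y hy ih =>
      obtain ⟨x, hx⟩ := ih
      obtain ⟨c, hc, hcy⟩ := (hσ _ _ (hcode x)).1.surjOn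
        (show y ∈ (children r' par' (φ x) : Set V') from mem_children.2 ⟨hy, hx.symm⟩)
      obtain ⟨hc1, hc2⟩ := mem_children.1 hc
      exact ⟨c, by rw [hφ c hc1, hc2, hcy]⟩
  have hroot : ∀ x, φ x ≠ r' ↔ x ≠ r := fun x =>
    ⟨fun hx h => hx (h ▸ hφr), fun hx => (hpar x hx).1⟩
  have hpar' : ∀ a b, (φ a ≠ r' ∧ par' (φ a) = φ b) ↔ (a ≠ r ∧ par a = b) := by
    intro a b
    rw [hroot]
    refine and_congr_right fun ha => ?_
    rw [(hpar a ha).2]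
    exact hinj.eq_iff
  exact ⟨⟨Equiv.ofBijective φ ⟨hinj, hsurj⟩, by
    intro a b
    rw [h.adj_iff, ← hpar', ← hpar']
    exact h'.adj_iff _ _⟩⟩

end IsRooted

lemma ite_congr_iff {α : Type*} {p q : Prop} {_ : Decidable p} {_ : Decidable q} {a b : α}
    (h : p ↔ q) : (if p then a else b) = if q then a else b := by
  simp only [h]

section Closed

variable {V : Type*}

/-- `S` contains the parent of each of its members, as far as this parent lies in `U`. -/
def IsClosed (par : V → V) (U S : Finset V) : Prop :=
  S ⊆ U ∧ ∀ x ∈ S, par x ∈ U → par x ∈ S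

open Classical in
/-- The weight of a vertex set: each vertex without children in the set contributes `s - 1`,
and every other vertex contributes `s - ε`. -/
noncomputable def weight (par : V → V) (S : Finset V) : ℤ[X][X] :=
  ∏ x ∈ S, if ∃ y ∈ S, par y = x then X - C X else X - 1

open Classical in
/-- The closed subsets of `U`. -/
noncomputable def closedSets (par : V → V) (U : Finset V) : Finset (Finset V) :=
  U.powerset.filter (IsClosed par U)

/-- The weighted number of closed subsets of `U`. -/
noncomputable def closedSum (par : V → V) (U : Finset V) : ℤ[X][X] :=
  ∑ S ∈ closedSets par U, weight par S

lemma mem_closedSets {par : V → V} {U S : Finset V} :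
    S ∈ closedSets par U ↔ IsClosed par U S := by
  simp only [closedSets, Finset.mem_filter, Finset.mem_powerset]
  exact ⟨fun h => h.2, fun h => ⟨h.1, h⟩⟩

lemma closedSets_congr {par par' : V → V} {U : Finset V} (h : ∀ x ∈ U, par x = par' x) :
    closedSets par U = closedSets par' U := by
  ext S
  rw [mem_closedSets, mem_closedSets]
  refine and_congr_right fun hS => forall₂_congr fun x hx => ?_
  rw [h x (hS hx)]

lemma weight_congr {par par' : V → V} {S : Finset V} (h : ∀ x ∈ S, par x = par' x) :
    weight par S = weight par' S := by
  classical
  refine Finset.prod_congr rfl fun x _ => ?_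
  have : (∃ y ∈ S, par y = x) ↔ ∃ y ∈ S, par' y = x :=
    exists_congr fun y => and_congr_right fun hy => by rw [h y hy]
  exact ite_congr_iff this

lemma closedSum_congr {par par' : V → V} {U : Finset V} (h : ∀ x ∈ U, par x = par' x) :
    closedSum par U = closedSum par' U := by
  rw [closedSum, closedSum, closedSets_congr h]
  exact Finset.sum_congr rfl fun S hS => weight_congr fun x hx =>
    h x ((mem_closedSets.1 hS).1 hx)

lemma closedSum_empty (par : V → V) : closedSum par ∅ = 1 := by
  have : closedSets par ∅ = {∅} := by
    ext S
    rw [mem_closedSets, Finset.mem_singleton]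
    refine ⟨fun h => Finset.subset_empty.1 h.1, ?_⟩
    rintro rfl
    exact ⟨subset_rfl, by simp⟩
  rw [closedSum, this, Finset.sum_singleton, weight, Finset.prod_empty]

lemma closedSum_union [DecidableEq V] {par : V → V} {U W : Finset V} (hd : Disjoint U W)
    (hU : ∀ x ∈ U, par x ∉ W) (hW : ∀ x ∈ W, par x ∉ U) :
    closedSum par (U ∪ W) = closedSum par U * closedSum par W := by
  rw [closedSum, closedSum, closedSum, Finset.sum_mul_sum, ← Finset.sum_product']
  symm
  have hUW : ∀ {S R : Finset V}, S ⊆ U → R ⊆ W → (S ∪ R) ∩ U = S ∧ (S ∪ R) ∩ W = R := by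
    intro S R hS hR
    rw [Finset.disjoint_left] at hd
    constructor <;> ext x <;> have := @hd x <;> have := @hS x <;> have := @hR x <;>
      simp only [Finset.mem_inter, Finset.mem_union] <;> tauto
  refine Finset.sum_bij' (fun p _ => p.1 ∪ p.2) (fun S _ => (S ∩ U, S ∩ W)) ?_ ?_ ?_ ?_ ?_
  · rintro ⟨S, R⟩ h
    simp only [Finset.mem_product, mem_closedSets] at h ⊢
    refine ⟨Finset.union_subset_union h.1.1 h.2.1, fun x hx hpx => ?_⟩
    rw [Finset.mem_union] at hx hpx ⊢
    obtain hx | hx := hx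
    · have := hU x (h.1.1 hx)
      exact Or.inl (h.1.2 x hx (by tauto))
    · have := hW x (h.2.1 hx)
      exact Or.inr (h.2.2 x hx (by tauto))
  · intro S h
    simp only [Finset.mem_product, mem_closedSets] at h ⊢
    refine ⟨⟨Finset.inter_subset_right, fun x hx hpx => ?_⟩,
      ⟨Finset.inter_subset_right, fun x hx hpx => ?_⟩⟩ <;>
    · rw [Finset.mem_inter] at hx ⊢
      exact ⟨h.2 x hx.1 (by simp [hpx]), hpx⟩
  · rintro ⟨S, R⟩ h
    simp only [Finset.mem_product, mem_closedSets] at h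
    simp only [Prod.mk.injEq]
    exact hUW h.1.1 h.2.1
  · intro S h
    rw [mem_closedSets] at h
    rw [← Finset.inter_union_distrib_left]
    exact Finset.inter_eq_left.2 h.1
  · rintro ⟨S, R⟩ h
    simp only [Finset.mem_product, mem_closedSets] at h
    have hSR : Disjoint S R := hd.mono h.1.1 h.2.1
    simp only [weight]
    rw [Finset.prod_union hSR]
    congr 1 <;> refine Finset.prod_congr rfl fun x hx => ?_
    · have : (∃ y ∈ S ∪ R, par y = x) ↔ ∃ y ∈ S, par y = x := by
        refine ⟨?_, fun ⟨y, hy, hyx⟩ => ⟨y, Finset.mem_union_left _ hy, hyx⟩⟩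
        rintro ⟨y, hy, rfl⟩
        obtain hy | hy := Finset.mem_union.1 hy
        · exact ⟨y, hy, rfl⟩
        · exact absurd (h.1.1 hx) (hW y (h.2.1 hy))
      exact ite_congr_iff this.symm
    · have : (∃ y ∈ S ∪ R, par y = x) ↔ ∃ y ∈ R, par y = x := by
        refine ⟨?_, fun ⟨y, hy, hyx⟩ => ⟨y, Finset.mem_union_right _ hy, hyx⟩⟩
        rintro ⟨y, hy, rfl⟩
        obtain hy | hy := Finset.mem_union.1 hy
        · exact absurd (h.2.1 hx) (hU y (h.1.1 hy))
        · exact ⟨y, hy, rfl⟩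
      exact ite_congr_iff this.symm

/-- Adding a root edge `x` below the branches in `U`. -/
lemma closedSum_insert [DecidableEq V] {par : V → V} {d : V → ℕ} {U : Finset V} {x : V}
    (hx : x ∉ U) (hpx : par x ∉ insert x U) (hU : ∀ y ∈ U, par y = x ∨ par y ∈ U)
    (hdepth : ∀ y ∈ U, d y = d (par y) + 1) :
    closedSum par (insert x U) = planted (closedSum par U) := by
  have hcl : ∀ S, IsClosed par (insert x U) S ↔
      S = ∅ ∨ ∃ S', IsClosed par U S' ∧ S = insert x S' := by
    intro S
    constructor
    · intro h
      obtain rfl | hne := S.eq_empty_or_nonempty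
      · exact Or.inl rfl
      right
      have hxS : x ∈ S := by
        obtain ⟨y, hy, hmin⟩ := S.exists_min_image d hne
        obtain rfl | hyU := Finset.mem_insert.1 (h.1 hy)
        · exact hy
        · have hpS : par y ∈ S := h.2 y hy (Finset.mem_insert.2 (hU y hyU))
          have := hmin _ hpS
          have := hdepth y hyU
          omega
      refine ⟨S.erase x, ⟨?_, ?_⟩, (Finset.insert_erase hxS).symm⟩
      · exact Finset.subset_insert_iff.1 h.1
      · intro y hy hyU
        refine Finset.mem_erase.2 ⟨fun h => hx (h ▸ hyU), ?_⟩
        exact h.2 y (Finset.mem_of_mem_erase hy) (Finset.mem_insert_of_mem hyU)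
    · rintro (rfl | ⟨S', h, rfl⟩)
      · exact ⟨by simp, by simp⟩
      · refine ⟨Finset.insert_subset_insert _ h.1, fun y hy hyU => ?_⟩
        obtain rfl | hy := Finset.mem_insert.1 hy
        · exact absurd hyU hpx
        · obtain h2 | h2 := Finset.mem_insert.1 hyU
          · rw [h2]; exact Finset.mem_insert_self _ _
          · exact Finset.mem_insert_of_mem (h.2 y hy h2)
  have hnot : ∀ S ∈ closedSets par U, x ∉ S := fun S hS h => hx ((mem_closedSets.1 hS).1 h)
  have hsets : closedSets par (insert x U) =
      insert ∅ ((closedSets par U).image (insert x)) := by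
    ext S
    rw [mem_closedSets, hcl]
    simp only [Finset.mem_insert, Finset.mem_image, mem_closedSets, eq_comm (a := S)]
  have hinj : Set.InjOn (insert x) (closedSets par U : Set (Finset V)) := by
    intro S hS R hR h
    rw [← Finset.erase_insert (hnot S hS), ← Finset.erase_insert (hnot R hR), h]
  have hempty : (∅ : Finset V) ∈ closedSets par U := mem_closedSets.2 ⟨by simp, by simp⟩
  have hw : ∀ S ∈ closedSets par U, weight par (insert x S) =
      (if S = ∅ then X - 1 else X - C X) * weight par S := by
    intro S hS
    have hSU := (mem_closedSets.1 hS)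
    rw [weight, Finset.prod_insert (hnot S hS), weight]
    congr 1
    · have : (∃ y ∈ insert x S, par y = x) ↔ S ≠ ∅ := by
        constructor
        · rintro ⟨y, hy, hyx⟩ rfl
          rw [Finset.mem_insert] at hy
          obtain rfl | hy := hy
          · exact hpx (by rw [hyx]; simp)
          · simp at hy
        · intro hne
          obtain ⟨y, hy, hmin⟩ := S.exists_min_image d (Finset.nonempty_iff_ne_empty.2 hne)
          refine ⟨y, Finset.mem_insert_of_mem hy, (hU y (hSU.1 hy)).resolve_right fun h => ?_⟩
          have := hmin _ (hSU.2 y hy h)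
          have := hdepth y (hSU.1 hy)
          omega
      simp only [this, ite_not, ne_eq]
    · refine Finset.prod_congr rfl fun z hz => ?_
      have : (∃ y ∈ insert x S, par y = z) ↔ ∃ y ∈ S, par y = z := by
        simp only [Finset.mem_insert, exists_eq_or_imp, or_iff_right_iff_imp]
        rintro rfl
        exact absurd (Finset.mem_insert_of_mem (hSU.1 hz)) hpx
      exact ite_congr_iff this
  rw [closedSum, hsets, Finset.sum_insert (by simp [Finset.mem_image]),
    Finset.sum_image hinj, Finset.sum_congr rfl hw, closedSum,
    ← Finset.insert_erase hempty, Finset.sum_insert (Finset.notMem_erase _ _),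
    Finset.sum_insert (Finset.notMem_erase _ _)]
  rw [Finset.sum_congr rfl fun S hS => by rw [if_neg (Finset.ne_of_mem_erase hS)],
    ← Finset.mul_sum]
  simp only [weight, Finset.prod_empty, planted, if_true]
  ring

lemma closedSum_singleton [DecidableEq V] {par : V → V} {x : V} (hx : par x ≠ x) :
    closedSum par {x} = X := by
  have := closedSum_insert (U := ∅) (x := x) (par := par) (d := fun _ => 0) (by simp)
    (by simpa using hx) (by simp) (by simp)
  rw [insert_empty_eq, closedSum_empty, planted_one] at this
  exact this

end Closed

namespace IsRooted

variable {V : Type*} [Fintype V] {G : SimpleGraph V} {r : V} {par : V → V} {d : V → ℕ}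

open Classical in
/-- The strict descendants of `x`. -/
noncomputable def descendants (par : V → V) (r x : V) : Finset V :=
  Finset.univ.filter fun y => y ≠ r ∧ ∃ k, par^[k] (par y) = x

lemma mem_descendants {x y : V} :
    y ∈ descendants par r x ↔ y ≠ r ∧ ∃ k, par^[k] (par y) = x := by
  simp [descendants]

omit [Fintype V] in
lemma iterate_root (h : IsRooted G r par d) (k : ℕ) : par^[k] r = r :=
  Function.iterate_fixed h.par_root k

lemma descendants_root (h : IsRooted G r par d) [DecidableEq V] :
    descendants par r r = Finset.univ.erase r := by
  ext y
  simp only [mem_descendants, Finset.mem_erase, Finset.mem_univ, and_true, and_iff_left_iff_imp]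
  intro _
  have : ∀ y, ∃ k, par^[k] y = r := by
    intro y
    induction y using h.root_induction with
    | root => exact ⟨0, rfl⟩
    | step x hx ih =>
      obtain ⟨k, hk⟩ := ih
      exact ⟨k + 1, hk⟩
  exact this _

omit [Fintype V] in
lemma depth_iterate_le (h : IsRooted G r par d) (k : ℕ) (y : V) (hy : par^[k] y ≠ r) :
    d y = d (par^[k] y) + k := by
  induction k generalizing y with
  | zero => rfl
  | succ k ih =>
    rw [Function.iterate_succ_apply] at hy ⊢
    have hyr : y ≠ r := by
      rintro rfl
      exact hy (by rw [h.par_root, h.iterate_root])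
    rw [h.depth y hyr, ih _ hy]
    omega

lemma depth_descendants (h : IsRooted G r par d) {x y : V} (hx : x ≠ r)
    (hy : y ∈ descendants par r x) : d x < d y := by
  obtain ⟨hyr, k, rfl⟩ := mem_descendants.1 hy
  have := h.depth_iterate_le k (par y) hx
  have := h.depth y hyr
  omega

lemma insert_descendants_iff (h : IsRooted G r par d) [DecidableEq V] {c y : V} (hc : c ≠ r) :
    y ∈ insert c (descendants par r c) ↔ ∃ k, par^[k] y = c := by
  rw [Finset.mem_insert, mem_descendants]
  constructor
  · rintro (rfl | ⟨_, k, hk⟩)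
    · exact ⟨0, rfl⟩
    · exact ⟨k + 1, hk⟩
  · rintro ⟨k, hk⟩
    cases k with
    | zero => exact Or.inl hk
    | succ k =>
      refine Or.inr ⟨?_, k, hk⟩
      rintro rfl
      exact hc (by rw [← hk, h.iterate_root])

lemma descendants_eq_biUnion (h : IsRooted G r par d) [DecidableEq V] (x : V) :
    descendants par r x =
      (children r par x).biUnion fun c => insert c (descendants par r c) := by
  ext y
  simp only [Finset.mem_biUnion, mem_children]
  constructor
  · intro hy
    obtain ⟨hyr, hk⟩ := mem_descendants.1 hy
    have hk : ∃ k, par^[k] (par y) = x := hk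
    induction hk' : Nat.find hk with
    | zero =>
      have := Nat.find_spec hk
      rw [hk'] at this
      exact ⟨y, ⟨hyr, this⟩, Finset.mem_insert_self _ _⟩
    | succ k _ =>
      have h1 := Nat.find_spec hk
      rw [hk', Function.iterate_succ_apply'] at h1
      have h3 : par^[k] (par y) ≠ r := by
        intro h4
        rw [h4, h.par_root] at h1
        exact Nat.find_min hk (m := k) (by omega) (h4.trans h1)
      exact ⟨_, ⟨h3, h1⟩, (h.insert_descendants_iff h3).2 ⟨k + 1, rfl⟩⟩
  · rintro ⟨c, ⟨hc, rfl⟩, hy⟩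
    obtain ⟨k, rfl⟩ := (h.insert_descendants_iff hc).1 hy
    refine mem_descendants.2 ⟨?_, k, ?_⟩
    · rintro rfl
      exact hc (h.iterate_root k)
    · rw [← Function.iterate_succ_apply, Function.iterate_succ_apply']

lemma isCode_closedSum (h : IsRooted G r par d) :
    IsCode r par fun x => closedSum par (descendants par r x) := by
  classical
  intro x
  simp only
  rw [h.descendants_eq_biUnion x]
  have key : ∀ c ∈ children r par x, closedSum par (insert c (descendants par r c)) =
      planted (closedSum par (descendants par r c)) := by
    intro c hc
    obtain ⟨hc, -⟩ := mem_children.1 hc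
    have hdc := h.depth c hc
    refine closedSum_insert (d := d) (fun hcc => ?_) (fun hcc => ?_) (fun y hy => ?_)
      (fun y hy => h.depth y (mem_descendants.1 hy).1)
    · exact lt_irrefl _ (h.depth_descendants hc hcc)
    · obtain hcc | hcc := Finset.mem_insert.1 hcc
      · rw [hcc] at hdc; omega
      · have := h.depth_descendants hc hcc; omega
    · rw [← Finset.mem_insert, h.insert_descendants_iff hc]
      exact (mem_descendants.1 hy).2
  rw [← Finset.prod_congr rfl key]
  have hsub : ∀ C ⊆ children r par x,
      closedSum par (C.biUnion fun c => insert c (descendants par r c)) =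
        ∏ c ∈ C, closedSum par (insert c (descendants par r c)) := by
    intro C
    induction C using Finset.induction_on with
    | empty => intro _; rw [Finset.biUnion_empty, closedSum_empty, Finset.prod_empty]
    | insert a C ha ih =>
      intro hC
      have haC := mem_children.1 (hC (Finset.mem_insert_self a C))
      have hCC : ∀ c ∈ C, c ≠ r ∧ par c = x := fun c hc =>
        mem_children.1 (hC (Finset.mem_insert_of_mem hc))
      have aux : ∀ {b c : V} (y : V), b ≠ r ∧ par b = x → c ≠ r ∧ par c = x →
          y ∈ insert b (descendants par r b) → y ∈ insert c (descendants par r c) → b = c := by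
        intro b c y hb hc hyb hyc
        obtain ⟨k, hk⟩ := (h.insert_descendants_iff hb.1).1 hyb
        obtain ⟨l, hl⟩ := (h.insert_descendants_iff hc.1).1 hyc
        have h1 := h.depth_iterate_le k y (hk ▸ hb.1)
        have h2 := h.depth_iterate_le l y (hl ▸ hc.1)
        have h3 := h.depth b hb.1
        have h4 := h.depth c hc.1
        rw [hb.2] at h3
        rw [hc.2] at h4
        rw [hk] at h1
        rw [hl] at h2
        have : k = l := by omega
        subst this
        exact hk.symm.trans hl
      have aux' : ∀ {b c : V} (y : V), b ≠ r ∧ par b = x → c ≠ r ∧ par c = x →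
          y ∈ insert b (descendants par r b) → par y ∈ insert c (descendants par r c) →
            b = c := by
        intro b c y hb hc hyb hyc
        obtain ⟨l, hl⟩ := (h.insert_descendants_iff hc.1).1 hyc
        exact aux y hb hc hyb ((h.insert_descendants_iff hc.1).2 ⟨l + 1, hl⟩)
      rw [Finset.biUnion_insert, Finset.prod_insert ha, closedSum_union,
        ih ((Finset.subset_insert _ _).trans hC)]
      · rw [Finset.disjoint_left]
        intro y hy hy'
        obtain ⟨c, hc, hyc⟩ := Finset.mem_biUnion.1 hy'
        exact ha (aux y haC (hCC c hc) hy hyc ▸ hc)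
      · intro y hy hy'
        obtain ⟨c, hc, hyc⟩ := Finset.mem_biUnion.1 hy'
        exact ha (aux' y haC (hCC c hc) hy hyc ▸ hc)
      · intro y hy hy'
        obtain ⟨c, hc, hyc⟩ := Finset.mem_biUnion.1 hy
        exact ha (aux' y (hCC c hc) haC hyc hy' ▸ hc)
  exact hsub _ subset_rfl

/-- The weighted number of rooted subtrees determines a rooted tree. -/
lemma nonempty_iso_of_closedSum_eq {V' : Type*} [Fintype V'] [DecidableEq V] [DecidableEq V']
    {G' : SimpleGraph V'}
    {r' : V'} {par' : V' → V'} {d' : V' → ℕ} (h : IsRooted G r par d)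
    (h' : IsRooted G' r' par' d')
    (heq : closedSum par (Finset.univ.erase r) = closedSum par' (Finset.univ.erase r')) :
    Nonempty (G ≃g G') := by
  refine h.nonempty_iso h' h.isCode_closedSum h'.isCode_closedSum ?_
  rw [h.descendants_root, h'.descendants_root, heq]

end IsRooted

section Edges

variable {V : Type*}

/-- `e` is incident to a vertex of degree one of the graph formed by `F`. -/
def IsLeafEdge (F : Finset (Sym2 V)) (e : Sym2 V) : Prop :=
  ∃ u ∈ e, ((fromEdgeSet (F : Set (Sym2 V))).neighborSet u).ncard = 1

open Classical in
/-- Each leaf edge contributes `s - 1`, and every other edge contributes `s - ε`. -/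
noncomputable def edgeWeight (F : Finset (Sym2 V)) : ℤ[X][X] :=
  ∏ e ∈ F, if IsLeafEdge F e then X - 1 else X - C X

open Classical in
/-- The subtrees of `G`. -/
noncomputable def subtrees [Fintype V] (G : SimpleGraph V) : Finset (Finset (Sym2 V)) :=
  Finset.univ.filter (IsSubtree G)

lemma mem_subtrees [Fintype V] {G : SimpleGraph V} {F : Finset (Sym2 V)} :
    F ∈ subtrees G ↔ IsSubtree G F := by simp [subtrees]

/-- The substitution `t = s - 1`, `t * (z + 1) = s - ε`. -/
noncomputable def substitution : ℤ[X][X] →+* FractionRing ℤ[X][X] :=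
  eval₂RingHom (eval₂RingHom (Int.castRingHom _)
    (algebraMap ℤ[X][X] _ (X - C X) / algebraMap ℤ[X][X] _ (X - 1) - 1))
    (algebraMap ℤ[X][X] _ (X - 1))

lemma substitution_tutteLike [Fintype V] (G : SimpleGraph V) :
    substitution (tutteLike G) =
      algebraMap ℤ[X][X] (FractionRing ℤ[X][X]) (∑ F ∈ subtrees G, edgeWeight F) := by
  classical
  have ht : algebraMap ℤ[X][X] (FractionRing ℤ[X][X]) (X - 1) ≠ 0 := by
    rw [Ne, FaithfulSMul.algebraMap_eq_zero_iff]
    exact X_sub_C_ne_zero (1 : ℤ[X])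
  rw [tutteLike, map_sum, map_sum]
  refine Finset.sum_congr ?_ fun F _ => ?_
  · ext F
    simp only [Finset.mem_filter, Finset.mem_powerset, mem_subtrees, and_iff_right_iff_imp]
    intro h e he
    simpa using h.1 he
  · have hL : leafCount F = (F.filter (IsLeafEdge F)).card := by
      rw [leafCount, ← Set.ncard_coe_finset]
      congr 1
      ext e
      simp [IsLeafEdge]
    have hcard := Finset.card_filter_add_card_filter_not (s := F) (IsLeafEdge F)
    rw [edgeWeight, Finset.prod_ite, Finset.prod_const, Finset.prod_const, hL,
      show F.card - (F.filter (IsLeafEdge F)).card =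
        (F.filter fun e => ¬ IsLeafEdge F e).card by omega]
    rw [← hcard]
    generalize (F.filter (IsLeafEdge F)).card = m
    generalize (F.filter fun e => ¬ IsLeafEdge F e).card = n
    simp only [substitution, map_mul, map_pow, coe_eval₂RingHom, eval₂_C, eval₂_X, map_add,
      map_one, sub_add_cancel]
    rw [div_pow, pow_add]
    field_simp

lemma sum_edgeWeight_eq [Fintype V] {G G' : SimpleGraph V} (h : tutteLike G = tutteLike G') :
    ∑ F ∈ subtrees G, edgeWeight F = ∑ F ∈ subtrees G', edgeWeight F := by
  apply FaithfulSMul.algebraMap_injective ℤ[X][X] (FractionRing ℤ[X][X])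
  rw [← substitution_tutteLike, h, substitution_tutteLike]

end Edges

namespace IsRooted

variable {V : Type*} {G : SimpleGraph V} {r : V} {par : V → V} {d : V → ℕ}

lemma par_ne (h : IsRooted G r par d) {x : V} (hx : x ≠ r) : par x ≠ x := fun hp => by
  have := h.depth x hx
  rw [hp] at this
  omega

lemma par_par_ne (h : IsRooted G r par d) {x : V} (hx : x ≠ r) : par (par x) ≠ x := fun hp => by
  have h1 := h.depth x hx
  by_cases hp' : par x = r
  · rw [hp', h.par_root] at hp
    exact hx hp.symm
  · have h2 := h.depth _ hp'
    rw [hp] at h2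
    omega

lemma edge_injective (h : IsRooted G r par d) {x y : V} (hx : x ≠ r)
    (hxy : s(x, par x) = s(y, par y)) : x = y := by
  rw [Sym2.eq_iff] at hxy
  obtain ⟨h1, -⟩ | ⟨h1, h2⟩ := hxy
  · exact h1
  · subst h2
    exact absurd h1.symm (h.par_par_ne hx)

lemma edge_mem (h : IsRooted G r par d) {x : V} (hx : x ≠ r) : s(x, par x) ∈ G.edgeSet := by
  rw [mem_edgeSet, h.adj_iff]
  exact Or.inl ⟨hx, rfl⟩

lemma exists_eq_edge (h : IsRooted G r par d) {e : Sym2 V} (he : e ∈ G.edgeSet) :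
    ∃ x, x ≠ r ∧ e = s(x, par x) := by
  induction e using Sym2.ind with
  | _ a b =>
    rw [mem_edgeSet, h.adj_iff] at he
    obtain ⟨h1, rfl⟩ | ⟨h1, rfl⟩ := he
    · exact ⟨a, h1, rfl⟩
    · exact ⟨b, h1, Sym2.eq_swap⟩

/-- A walk to the root uses the parent edge of its starting vertex. -/
lemma edge_mem_of_reachable (h : IsRooted G r par d) {F : Set (Sym2 V)} (hF : F ⊆ G.edgeSet)
    {y : V} (hy : y ≠ r) (hr : (fromEdgeSet F).Reachable y r) : s(y, par y) ∈ F := by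
  obtain ⟨p⟩ := hr
  obtain ⟨e, -, he1, he2⟩ := p.exists_boundary_dart {z | ∃ k, par^[k] z = y} ⟨0, rfl⟩ (by
    rintro ⟨k, hk⟩
    rw [Function.iterate_fixed h.par_root] at hk
    exact hy hk.symm)
  have hadj := e.adj
  rw [fromEdgeSet_adj] at hadj
  obtain ⟨k, hk⟩ := he1
  have hG := hF hadj.1
  rw [mem_edgeSet, h.adj_iff] at hG
  obtain ⟨h1, h2⟩ | ⟨h1, h2⟩ := hG
  · cases k with
    | zero =>
      have hk : e.fst = y := hk
      rw [← hk, h2]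
      exact hadj.1
    | succ k =>
      refine absurd ⟨k, ?_⟩ he2
      rw [← h2]
      exact hk
  · refine absurd ⟨k + 1, ?_⟩ he2
    rw [Function.iterate_succ_apply, h2]
    exact hk

/-- The edge set given by a set of vertices together with `a`. -/
noncomputable def edges (par : V → V) (a : V) (S : Finset V) : Finset (Sym2 V) :=
  open Classical in (insert a S).image fun x => s(x, par x)

lemma mem_edges {a : V} {S : Finset V} {e : Sym2 V} :
    e ∈ edges par a S ↔ ∃ x, (x = a ∨ x ∈ S) ∧ s(x, par x) = e := by
  simp [edges, eq_comm (a := e)]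

lemma edge_mem_edges (h : IsRooted G r par d) {a : V} {S : Finset V} {x : V} (hx : x ≠ r) :
    s(x, par x) ∈ edges par a S ↔ x = a ∨ x ∈ S := by
  rw [mem_edges]
  exact ⟨fun ⟨y, hy, hyx⟩ => h.edge_injective hx hyx.symm ▸ hy, fun hx => ⟨x, hx, rfl⟩⟩

lemma adj_edges (h : IsRooted G r par d) {a : V} {S : Finset V} {x y : V} (ha : a ≠ r)
    (hS : ∀ x ∈ S, x ≠ r) :
    (fromEdgeSet (edges par a S : Set (Sym2 V))).Adj x y ↔
      ((x = a ∨ x ∈ S) ∧ par x = y) ∨ ((y = a ∨ y ∈ S) ∧ par y = x) := by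
  have hne : ∀ z, z = a ∨ z ∈ S → z ≠ r := fun z hz => hz.elim (fun h => h ▸ ha) (hS z)
  rw [fromEdgeSet_adj, Finset.mem_coe, mem_edges]
  constructor
  · rintro ⟨⟨z, hz, he⟩, -⟩
    rw [Sym2.eq_iff] at he
    obtain ⟨rfl, h1⟩ | ⟨rfl, h1⟩ := he
    · exact Or.inl ⟨hz, h1⟩
    · exact Or.inr ⟨hz, h1⟩
  · rintro (⟨hz, rfl⟩ | ⟨hz, rfl⟩)
    · exact ⟨⟨x, hz, rfl⟩, (h.par_ne (hne x hz)).symm⟩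
    · exact ⟨⟨y, hz, Sym2.eq_swap⟩, h.par_ne (hne y hz)⟩

variable [Fintype V] [DecidableEq V]

lemma isSubtree_edges (h : IsRooted G r par d) {a : V} {S : Finset V} (ha : a ≠ r)
    (har : par a = r) (hS : IsClosed par ((Finset.univ.erase r).erase a) S) :
    IsSubtree G (edges par a S) := by
  have hSr : ∀ x ∈ S, x ≠ r := fun x hx => by have := hS.1 hx; simp at this; exact this.2
  constructor
  · intro e he
    obtain ⟨x, hx, rfl⟩ := mem_edges.1 he
    exact h.edge_mem (hx.elim (fun h => h ▸ ha) (hSr x))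
  · have hr : ∀ x, (x = a ∨ x ∈ S) →
        (fromEdgeSet (edges par a S : Set (Sym2 V))).Reachable x r := by
      intro x
      induction x using h.root_induction with
      | root => intro _; rfl
      | step x hx ih =>
        intro hxS
        have hadj : (fromEdgeSet (edges par a S : Set (Sym2 V))).Adj x (par x) :=
          (h.adj_edges ha hSr).2 (Or.inl ⟨hxS, rfl⟩)
        refine hadj.reachable.trans ?_
        by_cases hpr : par x = r
        · rw [hpr]
        refine ih ?_
        by_cases hpa : par x = a
        · exact Or.inl hpa
        · refine Or.inr (hS.2 x (hxS.resolve_left ?_) (by simp [hpr, hpa]))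
          rintro rfl
          exact hpr har
    have hr' : ∀ x, x ∈ (fromEdgeSet (edges par a S : Set (Sym2 V))).support →
        (fromEdgeSet (edges par a S : Set (Sym2 V))).Reachable x r := by
      intro x hx
      obtain ⟨y, hxy⟩ := (mem_support _).1 hx
      have h1 := (h.adj_edges ha hSr).1 hxy
      obtain ⟨h1, -⟩ | ⟨h1, -⟩ := h1
      · exact hr x h1
      · exact hxy.reachable.trans (hr y h1)
    intro u v hu hv
    exact (hr' u hu).trans (hr' v hv).symm

lemma isLeafEdge_edges (h : IsRooted G r par d) {a : V} {S : Finset V} (ha : a ≠ r)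
    (har : par a = r) (hS : IsClosed par ((Finset.univ.erase r).erase a) S) {x : V}
    (hx : x ∈ S) : IsLeafEdge (edges par a S) s(x, par x) ↔ ¬ ∃ y ∈ S, par y = x := by
  have hSra : ∀ x ∈ S, x ≠ a ∧ x ≠ r := fun x hx => by simpa using hS.1 hx
  have hSr : ∀ x ∈ S, x ≠ r := fun x hx => (hSra x hx).2
  have hxr := hSr x hx
  have hxa := (hSra x hx).1
  have hadj := fun x y => h.adj_edges (x := x) (y := y) ha hSr
  constructor
  · rintro ⟨u, hu, hdeg⟩ ⟨y, hy, rfl⟩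
    obtain ⟨z, hz⟩ := Set.ncard_eq_one.1 hdeg
    have hz' : ∀ w, (fromEdgeSet (edges par a S : Set (Sym2 V))).Adj u w → w = z := by
      intro w hw
      have : w ∈ ({z} : Set V) := hz ▸ hw
      exact this
    rw [Sym2.mem_iff] at hu
    obtain rfl | rfl := hu
    · have h1 := hz' y ((hadj _ _).2 (Or.inr ⟨Or.inr hy, rfl⟩))
      have h2 := hz' (par (par y)) ((hadj _ _).2 (Or.inl ⟨Or.inr hx, rfl⟩))
      exact h.par_par_ne (hSr y hy) (h2.trans h1.symm)
    · have h1 := hz' (par y) ((hadj _ _).2 (Or.inr ⟨Or.inr hx, rfl⟩))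
      by_cases hpr : par (par y) = r
      · have h2 := hz' a ((hadj _ _).2 (Or.inr ⟨Or.inl rfl, har.trans hpr.symm⟩))
        exact hxa (h1.trans h2.symm)
      · have h3 : par (par y) = a ∨ par (par y) ∈ S := by
          by_cases hpa : par (par y) = a
          · exact Or.inl hpa
          · exact Or.inr (hS.2 _ hx (by simp [hpa, hpr]))
        have h2 := hz' _ ((hadj _ _).2 (Or.inl ⟨h3, rfl⟩))
        exact h.par_par_ne hxr (h2.trans h1.symm)
  · intro hno
    refine ⟨x, Sym2.mem_mk_left _ _, Set.ncard_eq_one.2 ⟨par x, ?_⟩⟩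
    ext w
    rw [mem_neighborSet, hadj, Set.mem_singleton_iff]
    constructor
    · rintro (⟨-, h1⟩ | ⟨rfl | h1, h2⟩)
      · exact h1.symm
      · exact absurd (h2.symm.trans har) hxr
      · exact absurd ⟨w, h1, h2⟩ hno
    · rintro rfl
      exact Or.inl ⟨Or.inr hx, rfl⟩

lemma isLeafEdge_edges_root (h : IsRooted G r par d) {a : V} {S : Finset V} (ha : a ≠ r)
    (har : par a = r) (hS : IsClosed par ((Finset.univ.erase r).erase a) S)
    (hleaf : (∀ y, y ≠ r → par y ≠ a) ∨ ∀ y, y ≠ r → par y = r → y = a) :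
    IsLeafEdge (edges par a S) s(a, par a) := by
  have hSr : ∀ x ∈ S, x ≠ r := fun x hx => by have := hS.1 hx; simp at this; exact this.2
  have hadj := fun x y => h.adj_edges (x := x) (y := y) ha hSr
  have hne : ∀ z, z = a ∨ z ∈ S → z ≠ r := fun z hz => hz.elim (fun h => h ▸ ha) (hSr z)
  obtain hleaf | hleaf := hleaf
  · refine ⟨a, Sym2.mem_mk_left _ _, Set.ncard_eq_one.2 ⟨par a, ?_⟩⟩
    ext w
    rw [mem_neighborSet, hadj, Set.mem_singleton_iff]
    constructor
    · rintro (⟨-, h1⟩ | ⟨h1, h2⟩)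
      · exact h1.symm
      · exact absurd h2 (hleaf w (hne w h1))
    · rintro rfl
      exact Or.inl ⟨Or.inl rfl, rfl⟩
  · refine ⟨par a, Sym2.mem_mk_right _ _, Set.ncard_eq_one.2 ⟨a, ?_⟩⟩
    ext w
    rw [mem_neighborSet, hadj, Set.mem_singleton_iff, har]
    constructor
    · rintro (⟨h1, -⟩ | ⟨h1, h2⟩)
      · exact absurd rfl (hne r h1)
      · exact hleaf w (hne w h1) h2
    · rintro rfl
      exact Or.inr ⟨Or.inl rfl, har⟩

lemma edgeWeight_edges (h : IsRooted G r par d) {a : V} {S : Finset V} (ha : a ≠ r)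
    (har : par a = r) (hS : IsClosed par ((Finset.univ.erase r).erase a) S)
    (hleaf : (∀ y, y ≠ r → par y ≠ a) ∨ ∀ y, y ≠ r → par y = r → y = a) :
    edgeWeight (edges par a S) = (X - 1) * weight par S := by
  have hSra : ∀ x ∈ S, x ≠ a ∧ x ≠ r := fun x hx => by simpa using hS.1 hx
  have himage : edges par a S = (insert a S).image fun x => s(x, par x) := by
    ext e
    simp [mem_edges, eq_comm (a := e)]
  rw [edgeWeight, weight, Finset.prod_congr himage fun _ _ => rfl, Finset.prod_image,
    Finset.prod_insert (fun haS => (hSra a haS).1 rfl),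
    if_pos (h.isLeafEdge_edges_root ha har hS hleaf)]
  · congr 1
    refine Finset.prod_congr rfl fun x hx => ?_
    rw [← ite_not]
    exact ite_congr_iff (not_iff_comm.1 (h.isLeafEdge_edges ha har hS hx).symm)
  · intro x hx y _ hxy
    obtain rfl | hx := Finset.mem_insert.1 (Finset.mem_coe.1 hx)
    · exact h.edge_injective ha hxy
    · exact h.edge_injective (hSra x hx).2 hxy

open Classical in
/-- The subtrees containing a pendant edge `s(a, r)`. -/
lemma sum_edgeWeight_filter_mem (h : IsRooted G r par d) {a : V} (ha : a ≠ r)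
    (har : par a = r) (hleaf : (∀ y, y ≠ r → par y ≠ a) ∨ ∀ y, y ≠ r → par y = r → y = a) :
    ∑ F ∈ (subtrees G).filter (s(a, r) ∈ ·), edgeWeight F =
      (X - 1) * closedSum par ((Finset.univ.erase r).erase a) := by
  rw [closedSum, Finset.mul_sum]
  symm
  refine Finset.sum_bij (fun S _ => edges par a S) ?_ ?_ ?_ ?_
  · intro S hS
    rw [mem_closedSets] at hS
    rw [Finset.mem_filter, mem_subtrees]
    refine ⟨h.isSubtree_edges ha har hS, ?_⟩
    have := (h.edge_mem_edges (S := S) ha).2 (Or.inl rfl)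
    rwa [har] at this
  · intro S hS R hR hSR
    rw [mem_closedSets] at hS hR
    have key : ∀ {S R : Finset V}, IsClosed par ((Finset.univ.erase r).erase a) S →
        edges par a S = edges par a R → S ⊆ R := by
      intro S R hS hSR x hx
      have hxx : x ≠ a ∧ x ≠ r := by simpa using hS.1 hx
      have := (h.edge_mem_edges (a := a) (S := S) hxx.2).2 (Or.inr hx)
      rw [hSR, h.edge_mem_edges hxx.2] at this
      exact this.resolve_left hxx.1
    exact subset_antisymm (key hS hSR) (key hR hSR.symm)
  · intro F hF
    rw [Finset.mem_filter, mem_subtrees] at hF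
    obtain ⟨⟨hFG, hconn⟩, haF⟩ := hF
    have hsupp : ∀ {x y : V}, x ≠ y → s(x, y) ∈ F →
        x ∈ (fromEdgeSet (F : Set (Sym2 V))).support := fun hxy hF =>
      (mem_support _).2 ⟨_, (fromEdgeSet_adj _).2 ⟨hF, hxy⟩⟩
    have hrsupp : r ∈ (fromEdgeSet (F : Set (Sym2 V))).support :=
      hsupp (Ne.symm ha) (by rwa [Sym2.eq_swap])
    refine ⟨((Finset.univ.erase r).erase a).filter fun x => s(x, par x) ∈ F, ?_, ?_⟩
    · rw [mem_closedSets]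
      refine ⟨Finset.filter_subset _ _, fun x hx hpx => ?_⟩
      rw [Finset.mem_filter] at hx ⊢
      refine ⟨hpx, ?_⟩
      have hxr : x ≠ r := by have := hx.1; simp at this; exact this.2
      have hpr : par x ≠ r := by simp at hpx; exact hpx.2
      refine h.edge_mem_of_reachable hFG hpr (hconn _ _ ?_ hrsupp)
      exact hsupp (h.par_ne hxr) (by rw [Sym2.eq_swap]; exact hx.2)
    · ext e
      rw [mem_edges]
      constructor
      · rintro ⟨x, rfl | hx, rfl⟩
        · rwa [har]
        · exact (Finset.mem_filter.1 hx).2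
      · intro he
        obtain ⟨x, hx, rfl⟩ := h.exists_eq_edge (hFG he)
        refine ⟨x, ?_, rfl⟩
        by_cases hxa : x = a
        · exact Or.inl hxa
        · exact Or.inr (Finset.mem_filter.2 ⟨by simp [hx, hxa], he⟩)
  · intro S hS
    rw [mem_closedSets] at hS
    exact (h.edgeWeight_edges ha har hS hleaf).symm

end IsRooted

lemma exists_isRooted {V : Type*} {T : SimpleGraph V} (hT : T.IsTree) (r : V) :
    ∃ par d, IsRooted T r par d := by
  classical
  have hex : ∀ x, x ≠ r → ∃ y, T.Adj x y ∧ T.dist x r = T.dist y r + 1 := by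
    intro x hx
    obtain ⟨p, hp⟩ := hT.connected.exists_walk_length_eq_dist x r
    cases p with
    | nil => exact absurd rfl hx
    | @cons _ y _ hxy q =>
      refine ⟨y, hxy, ?_⟩
      have h1 := dist_le q
      have h2 : T.dist x r ≤ T.dist y r + 1 := by
        obtain ⟨q', hq'⟩ := hT.connected.exists_walk_length_eq_dist y r
        rw [← hq', ← Walk.length_cons hxy]
        exact dist_le _
      rw [Walk.length_cons] at hp
      omega
  have hpath : ∀ x y, ∀ hxy : T.Adj x y, T.dist x r = T.dist y r + 1 →
      ∃ p : T.Walk x r, p.IsPath ∧ p.snd = y := by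
    intro x y hxy hd
    obtain ⟨q, hq⟩ := hT.connected.exists_walk_length_eq_dist y r
    exact ⟨Walk.cons hxy q, Walk.isPath_of_length_eq_dist _ (by rw [Walk.length_cons, hq, hd]),
      Walk.snd_cons _ _⟩
  have huniq : ∀ x y z, T.Adj x y → T.dist x r = T.dist y r + 1 → T.Adj x z →
      T.dist x r = T.dist z r + 1 → y = z := by
    intro x y z hy hdy hz hdz
    obtain ⟨p, hp, rfl⟩ := hpath x y hy hdy
    obtain ⟨q, hq, rfl⟩ := hpath x z hz hdz
    rw [(hT.existsUnique_path x r).unique hp hq]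
  choose! f hf using hex
  refine ⟨fun x => if x = r then r else f x, fun x => T.dist x r, ⟨by simp, ?_, ?_⟩⟩
  · intro x hx
    rw [if_neg hx]
    exact (hf x hx).2
  · have key : ∀ a b, (a ≠ r ∧ (if a = r then r else f a) = b) ↔
        T.Adj a b ∧ T.dist a r = T.dist b r + 1 := by
      intro a b
      constructor
      · rintro ⟨ha, rfl⟩
        rw [if_neg ha]
        exact hf a ha
      · rintro ⟨hab, hd⟩
        have ha : a ≠ r := by
          rintro rfl
          rw [dist_self] at hd
          omega
        rw [if_neg ha]
        exact ⟨ha, huniq a _ _ (hf a ha).1 (hf a ha).2 hab hd⟩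
    intro a b
    rw [key, key]
    refine ⟨fun hab => ?_, fun hab => hab.elim (fun h => h.1) (fun h => h.1.symm)⟩
    have := hT.dist_eq_dist_add_one_of_adj r hab
    rw [dist_comm (u := r), dist_comm (u := r)] at this
    exact this.imp (fun h => ⟨hab, h⟩) (fun h => ⟨hab.symm, h⟩)

lemma sum_edgeWeight_eq_add {V : Type*} [Fintype V] {G G' : SimpleGraph V} {e e' : Sym2 V}
    (h : ∀ f, (f ∈ G.edgeSet ∧ f ≠ e) ↔ (f ∈ G'.edgeSet ∧ f ≠ e')) :
    open Classical in
    ∑ F ∈ subtrees G', edgeWeight F + ∑ F ∈ (subtrees G).filter (e ∈ ·), edgeWeight F =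
      ∑ F ∈ subtrees G, edgeWeight F + ∑ F ∈ (subtrees G').filter (e' ∈ ·), edgeWeight F := by
  classical
  have hsub : ∀ {G G' : SimpleGraph V} {e e' : Sym2 V},
      (∀ f, (f ∈ G.edgeSet ∧ f ≠ e) → (f ∈ G'.edgeSet ∧ f ≠ e')) →
      ∀ F, IsSubtree G F ∧ e ∉ F → IsSubtree G' F ∧ e' ∉ F := by
    rintro G G' e e' h F ⟨⟨h1, h2⟩, h3⟩
    have h4 : ∀ f ∈ F, f ∈ G'.edgeSet ∧ f ≠ e' := fun f hf =>
      h f ⟨h1 hf, fun hfe => h3 (hfe ▸ hf)⟩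
    exact ⟨⟨fun f hf => (h4 f hf).1, h2⟩, fun he => (h4 e' he).2 rfl⟩
  have heq : (subtrees G).filter (e ∉ ·) = (subtrees G').filter (e' ∉ ·) := by
    ext F
    simp only [Finset.mem_filter, mem_subtrees]
    exact ⟨hsub (fun f => (h f).1) F, hsub (fun f => (h f).2) F⟩
  rw [← Finset.sum_filter_add_sum_filter_not (subtrees G') (e' ∈ ·),
    ← Finset.sum_filter_add_sum_filter_not (subtrees G) (e ∈ ·), heq]
  ring

set_option maxHeartbeats 400000 in
/-- The effect of a grafting operation, in terms of the grafted tree rooted at the vertex which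
receives the new edge. -/
lemma exists_isRooted_of_grafts {V : Type*} [Fintype V] [DecidableEq V] {T T' : SimpleGraph V}
    (hT : T.IsTree) (hg : Grafts T T') :
    ∃ (v : V) (par : V → V) (d : V → ℕ) (Z : ℤ[X][X]), IsRooted T' v par d ∧
      closedSum par (Finset.univ.erase v) = X * (X * Z) ∧
      ∑ F ∈ subtrees T', edgeWeight F + (X - 1) * planted Z =
        ∑ F ∈ subtrees T, edgeWeight F + (X - 1) * (X * Z) := by
  classical
  obtain ⟨n₁, n₂, v, h12, hn2, hn1, h1v, hv2, rfl⟩ := hg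
  have hv1 : v ≠ n₁ := h1v.ne'
  have h12' : n₁ ≠ n₂ := h12.ne
  have hnb2 : ∀ x, T.Adj n₂ x → x = n₁ := by
    obtain ⟨z, hz⟩ := Set.ncard_eq_one.1 hn2
    have hz' : ∀ x, T.Adj n₂ x → x = z := fun x hx => by
      have : x ∈ ({z} : Set V) := hz ▸ hx
      exact this
    exact fun x hx => (hz' x hx).trans (hz' n₁ h12.symm).symm
  have hnb1 : ∀ x, T.Adj n₁ x → x = n₂ ∨ x = v := by
    have hsub : ({n₂, v} : Set V) ⊆ T.neighborSet n₁ := by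
      rintro x (rfl | rfl)
      · exact h12
      · exact h1v
    have heq := Set.eq_of_subset_of_ncard_le hsub
      (by rw [hn1, Set.ncard_pair hv2.symm]) (Set.toFinite _)
    intro x hx
    have : x ∈ ({n₂, v} : Set V) := heq ▸ hx
    exact this
  obtain ⟨par, d, h⟩ := exists_isRooted hT n₂
  have hp1 : par n₁ = n₂ := by
    have := (h.adj_iff n₁ n₂).1 h12
    tauto
  have hpv : par v = n₁ := by
    have := (h.adj_iff n₁ v).1 h1v
    rw [hp1] at this
    have := hv2.symm
    tauto
  have hpar2 : ∀ y, y ≠ n₂ → par y = n₂ → y = n₁ := fun y hy hyp =>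
    hnb2 y ((h.adj_iff _ _).2 (Or.inr ⟨hy, hyp⟩))
  have hpar1 : ∀ y, y ≠ n₂ → par y = n₁ → y = v := fun y hy hyp =>
    (hnb1 y ((h.adj_iff _ _).2 (Or.inr ⟨hy, hyp⟩))).resolve_left hy
  obtain ⟨par', hpar'⟩ : ∃ f : V → V,
      f = fun x => if x = n₁ ∨ x = n₂ ∨ x = v then v else par x := ⟨_, rfl⟩
  obtain ⟨d', hd'⟩ : ∃ f : V → ℕ,
      f = fun x => if x = n₁ ∨ x = n₂ then d v + 1 else d x := ⟨_, rfl⟩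
  have hp'1 : par' n₁ = v := by simp [hpar']
  have hp'2 : par' n₂ = v := by simp [hpar']
  have hp'v : par' v = v := by simp [hpar']
  have hp' : ∀ x, x ≠ n₁ → x ≠ n₂ → x ≠ v → par' x = par x := fun x h1 h2 h3 => by
    simp [hpar', h1, h2, h3]
  have hadj : ∀ a b, (T.deleteEdges {s(n₁, n₂)} ⊔ fromEdgeSet {s(v, n₂)}).Adj a b ↔
      (T.Adj a b ∧ ¬ ((a = n₁ ∧ b = n₂) ∨ (a = n₂ ∧ b = n₁))) ∨
        ((a = v ∧ b = n₂) ∨ (a = n₂ ∧ b = v)) := by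
    intro a b
    rw [sup_adj, deleteEdges_adj, fromEdgeSet_adj, Set.mem_singleton_iff,
      Set.mem_singleton_iff, Sym2.eq_iff, Sym2.eq_iff]
    refine or_congr_right (and_iff_left_of_imp ?_)
    rintro (⟨rfl, rfl⟩ | ⟨rfl, rfl⟩)
    · exact hv2
    · exact hv2.symm
  have h' : IsRooted (T.deleteEdges {s(n₁, n₂)} ⊔ fromEdgeSet {s(v, n₂)}) v par' d' := by
    refine ⟨hp'v, fun x hx => ?_, fun a b => ?_⟩
    · have hd'v : d' v = d v := by simp [hd', hv1, hv2]
      by_cases h1 : x = n₁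
      · rw [h1, hp'1, hd'v]; simp [hd']
      by_cases h2 : x = n₂
      · rw [h2, hp'2, hd'v]; simp [hd']
      have h3 : par x ≠ n₁ := fun h3 => hx (hpar1 x h2 h3)
      have h4 : par x ≠ n₂ := fun h4 => h1 (hpar2 x h2 h4)
      rw [hp' x h1 h2 hx]
      simp only [hd', h1, h2, h3, h4, or_self, if_false]
      exact h.depth x h2
    · rw [hadj, h.adj_iff]
      have aux1 : ∀ a b, a ≠ n₂ ∧ par a = b → ¬ ((a = n₁ ∧ b = n₂) ∨ (a = n₂ ∧ b = n₁)) →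
          (a ≠ v ∧ par' a = b) ∨ (b ≠ v ∧ par' b = a) := by
        rintro a b ⟨ha, rfl⟩ hne
        by_cases hav : a = v
        · subst hav
          rw [hpv]
          exact Or.inr ⟨hv1.symm, hp'1⟩
        · have ha1 : a ≠ n₁ := by
            rintro rfl
            exact hne (Or.inl ⟨rfl, hp1⟩)
          exact Or.inl ⟨hav, hp' a ha1 ha hav⟩
      have aux2 : ∀ a b, a ≠ v ∧ par' a = b →
          (((a ≠ n₂ ∧ par a = b) ∨ (b ≠ n₂ ∧ par b = a)) ∧
            ¬ ((a = n₁ ∧ b = n₂) ∨ (a = n₂ ∧ b = n₁))) ∨ (a = n₂ ∧ b = v) := by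
        rintro a b ⟨ha, rfl⟩
        by_cases h1 : a = n₁
        · subst h1
          rw [hp'1]
          exact Or.inl ⟨Or.inr ⟨hv2, hpv⟩, by tauto⟩
        by_cases h2 : a = n₂
        · exact Or.inr ⟨h2, h2 ▸ hp'2⟩
        · rw [hp' a h1 h2 ha]
          exact Or.inl ⟨Or.inl ⟨h2, rfl⟩, by tauto⟩
      constructor
      · rintro (⟨hab | hab, hne⟩ | ⟨rfl, rfl⟩ | ⟨rfl, rfl⟩)
        · exact aux1 a b hab hne
        · exact (aux1 b a hab (by tauto)).symm
        · exact Or.inr ⟨hv2.symm, hp'2⟩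
        · exact Or.inl ⟨hv2.symm, hp'2⟩
      · rintro (hab | hab)
        · have := aux2 a b hab
          tauto
        · have := aux2 b a hab
          tauto
  obtain ⟨R, hRdef⟩ : ∃ s, s = ((Finset.univ.erase n₂).erase n₁).erase v := ⟨_, rfl⟩
  have hR : ∀ {x}, x ∈ R ↔ x ≠ v ∧ x ≠ n₁ ∧ x ≠ n₂ := by
    intro x
    simp [hRdef]
  have hparR : ∀ x ∈ R, par x ≠ n₁ ∧ par x ≠ n₂ := by
    intro x hx
    obtain ⟨h1, h2, h3⟩ := hR.1 hx
    exact ⟨fun h4 => h1 (hpar1 x h3 h4), fun h4 => h2 (hpar2 x h3 h4)⟩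
  have hpp : ∀ x ∈ R, par x = par' x := by
    intro x hx
    obtain ⟨h1, h2, h3⟩ := hR.1 hx
    exact (hp' x h2 h3 h1).symm
  have hZT : closedSum par ((Finset.univ.erase n₂).erase n₁) = planted (closedSum par R) := by
    rw [← Finset.insert_erase (s := (Finset.univ.erase n₂).erase n₁) (a := v)
      (by simp [hv1, hv2]), ← hRdef]
    refine closedSum_insert (d := d) (by simp [hRdef]) ?_ ?_ ?_
    · rw [hpv]
      simp [hRdef, hv1.symm]
    · intro y hy
      by_cases hyv : par y = v
      · exact Or.inl hyv
      · exact Or.inr (hR.2 ⟨hyv, hparR y hy⟩)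
    · exact fun y hy => h.depth y (hR.1 hy).2.2
  have hZT' : closedSum par' ((Finset.univ.erase v).erase n₂) = X * closedSum par R := by
    have : (Finset.univ.erase v).erase n₂ = {n₁} ∪ R := by
      ext x
      rw [Finset.mem_union, hR]
      simp only [Finset.mem_erase, Finset.mem_univ, and_true, Finset.mem_singleton]
      constructor
      · tauto
      · rintro (rfl | h3)
        · exact ⟨h12', hv1.symm⟩
        · tauto
    rw [this, closedSum_union, closedSum_singleton, closedSum_congr hpp]
    · rw [hp'1]; exact hv1
    · rw [Finset.disjoint_singleton_left, hR]; tauto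
    · intro x hx
      rw [Finset.mem_singleton.1 hx, hp'1, hR]
      tauto
    · intro x hx
      rw [← hpp x hx, Finset.mem_singleton]
      exact (hparR x hx).1
  have hZV : closedSum par' (Finset.univ.erase v) = X * (X * closedSum par R) := by
    have : Finset.univ.erase v = {n₂} ∪ (Finset.univ.erase v).erase n₂ := by
      rw [← Finset.insert_eq, Finset.insert_erase (by simp [hv2.symm])]
    rw [this, closedSum_union, closedSum_singleton, hZT']
    · rw [hp'2]; exact hv2
    · simp
    · intro x hx
      rw [Finset.mem_singleton.1 hx, hp'2]
      simp
    · intro x hx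
      rw [Finset.mem_singleton]
      by_cases hx1 : x = n₁
      · rw [hx1, hp'1]; exact hv2
      · have hxx : x ≠ n₂ ∧ x ≠ v := by simpa using hx
        rw [hp' x hx1 hxx.1 hxx.2]
        exact (hparR x (hR.2 ⟨hxx.2, hx1, hxx.1⟩)).2
  refine ⟨v, par', d', closedSum par R, h', hZV, ?_⟩
  have hsum := h.sum_edgeWeight_filter_mem h12' hp1 (Or.inr hpar2)
  have hsum' := h'.sum_edgeWeight_filter_mem hv2.symm hp'2 (Or.inl fun y hy hyp => by
    by_cases h1 : y = n₁
    · rw [h1, hp'1] at hyp; exact hv2 hyp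
    by_cases h2 : y = n₂
    · rw [h2, hp'2] at hyp; exact hv2 hyp
    · rw [hp' y h1 h2 hy] at hyp
      exact h1 (hpar2 y h2 hyp))
  rw [hZT] at hsum
  rw [hZT'] at hsum'
  rw [← hsum, ← hsum']
  suffices hmem : ∀ f, (f ∈ T.edgeSet ∧ f ≠ s(n₁, n₂)) ↔
      (f ∈ (T.deleteEdges {s(n₁, n₂)} ⊔ fromEdgeSet {s(v, n₂)}).edgeSet ∧ f ≠ s(n₂, v)) by
    convert sum_edgeWeight_eq_add hmem
  intro f
  induction f using Sym2.ind with
  | _ a b =>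
    have hn : ¬ T.Adj n₂ v := fun hn => hv1 (hnb2 v hn)
    rw [mem_edgeSet, mem_edgeSet, hadj, Ne, Ne, Sym2.eq_iff, Sym2.eq_iff]
    constructor
    · rintro ⟨hab, hne⟩
      refine ⟨Or.inl ⟨hab, hne⟩, ?_⟩
      rintro (⟨rfl, rfl⟩ | ⟨rfl, rfl⟩)
      · exact hn hab
      · exact hn hab.symm
    · rintro ⟨⟨hab, hne⟩ | hab, hne'⟩
      · exact ⟨hab, hne⟩
      · exact absurd hab.symm hne'

end PlantedTree

/-- If `T1` and `T2` are each obtained from a finite tree `T` by a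
single grafting operation and are not isomorphic as graphs, then their Tutte-like
polynomials are distinct: `f(T1;t,z) ≠ f(T2;t,z)`. -/
theorem stmt_14 {V : Type*} [Fintype V] (T T1 T2 : SimpleGraph V) (hT : T.IsTree)
    (h1 : Grafts T T1) (h2 : Grafts T T2) (hniso : ¬ Nonempty (T1 ≃g T2)) :
    tutteLike T1 ≠ tutteLike T2 := by
  classical
  intro heq
  obtain ⟨v, par, d, Z, hroot, hZ, hsum⟩ := PlantedTree.exists_isRooted_of_grafts hT h1
  obtain ⟨v', par', d', Z', hroot', hZ', hsum'⟩ := PlantedTree.exists_isRooted_of_grafts hT h2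
  have hT12 := PlantedTree.sum_edgeWeight_eq heq
  have hZZ : Z = Z' := by
    have h0 : ((Polynomial.X - 1) * Polynomial.C Polynomial.X :
        Polynomial (Polynomial ℤ)) ≠ 0 :=
      mul_ne_zero (Polynomial.X_sub_C_ne_zero (1 : Polynomial ℤ))
        (Polynomial.C_ne_zero.2 Polynomial.X_ne_zero)
    refine mul_left_cancel₀ h0 ?_
    simp only [PlantedTree.planted] at hsum hsum'
    linear_combination hsum' - hsum + hT12
  exact hniso (hroot.nonempty_iso_of_closedSum_eq hroot' (by rw [hZ, hZ', hZZ]))
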